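/- For every integer k ≥ 1 and every w > 2, one has Δ_{k,1}(w) = ( (2k)! / (√π · k! · Γ(k+1/2)) ) ∫_0^1 t^{k−1/2} (1−t)^{−1/2} / (w − 2 + 4t) dt. Consequently Δ_{k,1} is completely monotone on (2,∞), i.e. it is smooth there with (−1)^n Δ_{k,1}^{(n)}(w) ≥ 0 for all n ≥ 0 and w > 2. -/

import Mathlib

open Set MeasureTheory Filter

noncomputable def Pk (k : ℕ) (x : ℝ) : ℝ :=
  ∑ n ∈ Finset.range (k + 1), ((2 * k).choose (n + k) : ℝ) * (-x) ^ n

noncomputable def Pkhat (k : ℕ) (x : ℝ) : ℝ :=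
  Pk k x - ((2 * k).choose k : ℝ)

/-- The kernel `Φ_k(x,t)`. -/
noncomputable def Phi (k : ℕ) (x t : ℝ) : ℝ :=
  x⁻¹ * (if t ≤ x then Pk k (t / x) else -Pkhat k (x / t))

/-- The function `ψ_k`. -/
noncomputable def psiK (k : ℕ) (y : ℝ) : ℝ :=
  if 1 ≤ y then Pk k y⁻¹ else -Pkhat k y

/-- `f` is a `k`-Stieltjes function on `(0,∞)` (for `k ≥ 2`). -/
def IsStieltjesK (k : ℕ) (f : ℝ → ℝ) : Prop :=
  (∀ x > 0, 0 ≤ f x) ∧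
  ContDiffOn ℝ (2 * k - 3 : ℕ) f (Ioi 0) ∧
  (∀ n, 1 ≤ n → n ≤ k - 1 → ∀ x > 0,
    0 ≤ (-1 : ℝ) ^ (n - 1) * iteratedDeriv (2 * n - 1) (fun y => y ^ n * f y) x) ∧
  ConvexOn ℝ (Ioi 0)
    (fun x => (-1 : ℝ) ^ (k - 1) * iteratedDeriv (2 * k - 3) (fun y => y ^ k * f y) x)

/-- `g` is `k`-monotone on the open interval `I`. -/
def KMonotoneOn (k : ℕ) (g : ℝ → ℝ) (I : Set ℝ) : Prop :=
  if k = 1 then (∀ x ∈ I, 0 ≤ g x) ∧ AntitoneOn g I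
  else
    ContDiffOn ℝ (k - 2 : ℕ) g I ∧
    ∀ n ≤ k - 2,
      (∀ x ∈ I, 0 ≤ (-1 : ℝ) ^ n * iteratedDeriv n g x) ∧
      AntitoneOn (fun x => (-1 : ℝ) ^ n * iteratedDeriv n g x) I ∧
      ConvexOn ℝ I (fun x => (-1 : ℝ) ^ n * iteratedDeriv n g x)

/-- `v(w) = (w + √(w²−4))/2`. -/
noncomputable def vOf (w : ℝ) : ℝ := (w + Real.sqrt (w ^ 2 - 4)) / 2

/-- `F_u(w) = f(uv) f(u/v)`. -/
noncomputable def Fu (f : ℝ → ℝ) (u w : ℝ) : ℝ := f (u * vOf w) * f (u / vOf w)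

/-- `f` is `k`-hyperbolically monotone. -/
def IsHMk (k : ℕ) (f : ℝ → ℝ) : Prop :=
  (∀ x > 0, 0 ≤ f x) ∧ ∀ u > 0, KMonotoneOn k (Fu f u) (Ioi 2)

/-- `f` is power regular `k`-hyperbolically monotone. -/
def IsPRHMk (k : ℕ) (f : ℝ → ℝ) : Prop :=
  ∀ p > 0, IsHMk k (fun x => f x ^ p)

/-- `ψ_f(x) = -x (log f)'(x)`. -/
noncomputable def psiF (f : ℝ → ℝ) (x : ℝ) : ℝ := -x * deriv (fun y => Real.log (f y)) x

/-- `Δ_u(f)`. -/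
noncomputable def DeltaU (f : ℝ → ℝ) (u w : ℝ) : ℝ :=
  (psiF f (u * vOf w) - psiF f (u / vOf w)) / (vOf w - (vOf w)⁻¹)

/-- `Δ_{k,u}`. -/
noncomputable def DeltaKU (k : ℕ) (u w : ℝ) : ℝ :=
  (psiK k (u * vOf w) - psiK k (u / vOf w)) / (vOf w - (vOf w)⁻¹)


/-- the weight -/
noncomputable def gW (k : ℕ) (t : ℝ) : ℝ := t ^ ((k : ℝ) - 1 / 2) * (1 - t) ^ (-(1 / 2) : ℝ)

lemma gW_complex (k : ℕ) {t : ℝ} (ht : t ∈ Icc (0:ℝ) 1) :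
    (t : ℂ) ^ ((((k : ℝ) + 1 / 2 : ℝ) : ℂ) - 1) * (1 - (t : ℂ)) ^ (((1 / 2 : ℝ) : ℂ) - 1)
      = ((gW k t : ℝ) : ℂ) := by
  unfold gW
  have h1 : (0:ℝ) ≤ 1 - t := by linarith [ht.2]
  rw [Complex.ofReal_mul, Complex.ofReal_cpow ht.1, Complex.ofReal_cpow h1]
  push_cast
  congr 2 <;> ring

lemma gW_nonneg (k : ℕ) {t : ℝ} (ht : t ∈ Icc (0:ℝ) 1) : 0 ≤ gW k t := by
  have h1 : (0:ℝ) ≤ 1 - t := by linarith [ht.2]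
  exact mul_nonneg (Real.rpow_nonneg ht.1 _) (Real.rpow_nonneg h1 _)

lemma gW_int (k : ℕ) : IntervalIntegrable (gW k) volume 0 1 := by
  have h := Complex.betaIntegral_convergent (u := (((k : ℝ) + 1 / 2 : ℝ) : ℂ))
    (v := ((1 / 2 : ℝ) : ℂ)) (by rw [Complex.ofReal_re]; positivity)
    (by rw [Complex.ofReal_re]; positivity)
  have h2 := h.norm
  refine h2.congr ?_
  intro t ht
  rw [uIoc_of_le zero_le_one] at ht
  have ht' : t ∈ Icc (0:ℝ) 1 := ⟨ht.1.le, ht.2⟩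
  simp only
  rw [gW_complex k ht', Complex.norm_real, Real.norm_of_nonneg (gW_nonneg k ht')]

lemma gW_integral (k : ℕ) : ∫ t in (0:ℝ)..1, gW k t
    = Real.Gamma ((k : ℝ) + 1 / 2) * Real.sqrt Real.pi / (k.factorial : ℝ) := by
  have h := ProbabilityTheory.beta_eq_betaIntegralReal ((k : ℝ) + 1 / 2) (1 / 2)
    (by positivity) (by positivity)
  have h3 : Complex.betaIntegral (((k : ℝ) + 1 / 2 : ℝ) : ℂ) ((1 / 2 : ℝ) : ℂ)
      = ((∫ t in (0:ℝ)..1, gW k t : ℝ) : ℂ) := by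
    rw [← intervalIntegral.integral_ofReal]
    unfold Complex.betaIntegral
    apply intervalIntegral.integral_congr
    intro t ht
    rw [uIcc_of_le zero_le_one] at ht
    exact gW_complex k ht
  rw [h3, Complex.ofReal_re] at h
  rw [← h, ProbabilityTheory.beta, Real.Gamma_one_half_eq,
    show (k : ℝ) + 1 / 2 + 1 / 2 = k + 1 by ring, Real.Gamma_nat_eq_factorial]

lemma gW_div_int (k n : ℕ) {w : ℝ} (hw : 2 < w) :
    IntervalIntegrable (fun t => gW k t / (w - 2 + 4 * t) ^ n) volume 0 1 := by
  simp only [div_eq_mul_inv]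
  apply (gW_int k).mul_continuousOn
  apply ContinuousOn.inv₀ (by fun_prop)
  intro t ht
  rw [uIcc_of_le zero_le_one] at ht
  have : 0 < w - 2 + 4 * t := by linarith [ht.1]
  positivity

noncomputable def GI (k n : ℕ) (w : ℝ) : ℝ := ∫ t in (0:ℝ)..1, gW k t / (w - 2 + 4 * t) ^ n

lemma GI_nonneg (k n : ℕ) {w : ℝ} (hw : 2 < w) : 0 ≤ GI k n w := by
  apply intervalIntegral.integral_nonneg zero_le_one
  intro t ht
  have : 0 < w - 2 + 4 * t := by linarith [ht.1]
  exact div_nonneg (gW_nonneg k ht) (by positivity)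

lemma GI_deriv (k n : ℕ) {w : ℝ} (hw : 2 < w) :
    HasDerivAt (GI k n) (-(n : ℝ) * GI k (n + 1) w) w := by
  have hc : 2 < (w + 2) / 2 := by linarith
  have key := intervalIntegral.hasDerivAt_integral_of_dominated_loc_of_deriv_le
    (μ := volume) (a := (0:ℝ)) (b := 1) (s := Ioi ((w + 2) / 2)) (x₀ := w)
    (F := fun w t => gW k t / (w - 2 + 4 * t) ^ n)
    (F' := fun w t => -(n : ℝ) * (gW k t / (w - 2 + 4 * t) ^ (n + 1)))
    (bound := fun t => (n : ℝ) * (gW k t / ((w + 2) / 2 - 2 + 4 * t) ^ (n + 1)))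
    (Ioi_mem_nhds (by linarith)) ?_ (gW_div_int k n hw) ?_ ?_ ?_ ?_
  · have h := key.2
    rw [intervalIntegral.integral_const_mul] at h
    exact h
  · filter_upwards [Ioi_mem_nhds hw] with x hx
    have := gW_div_int k n hx
    rw [intervalIntegrable_iff] at this
    exact this.aestronglyMeasurable
  · have := (gW_div_int k (n + 1) hw).const_mul (-(n : ℝ))
    rw [intervalIntegrable_iff] at this
    exact this.aestronglyMeasurable
  · refine Eventually.of_forall fun t ht x hx => ?_
    rw [uIoc_of_le zero_le_one] at ht
    have ht' : t ∈ Icc (0:ℝ) 1 := ⟨ht.1.le, ht.2⟩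
    have hx' : (w + 2) / 2 < x := hx
    have h0 : 0 < (w + 2) / 2 - 2 + 4 * t := by linarith [ht.1]
    have h1 : (w + 2) / 2 - 2 + 4 * t ≤ x - 2 + 4 * t := by linarith
    have h2 : 0 < x - 2 + 4 * t := by linarith
    have hg := gW_nonneg k ht'
    rw [norm_mul, norm_neg, Real.norm_of_nonneg (Nat.cast_nonneg n),
      Real.norm_of_nonneg (by positivity)]
    gcongr
  · exact (gW_div_int k (n + 1) hc).const_mul _
  · refine Eventually.of_forall fun t ht x hx => ?_
    rw [uIoc_of_le zero_le_one] at ht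
    have hx' : (w + 2) / 2 < x := hx
    have h2 : 0 < x - 2 + 4 * t := by linarith [ht.1]
    have hb : HasDerivAt (fun x : ℝ => x - 2 + 4 * t) 1 x :=
      ((hasDerivAt_id x).sub_const 2).add_const _
    have hp : HasDerivAt (fun x : ℝ => (x - 2 + 4 * t) ^ n)
        ((n : ℝ) * (x - 2 + 4 * t) ^ (n - 1) * 1) x := hb.pow n
    have hi : HasDerivAt (fun x : ℝ => ((x - 2 + 4 * t) ^ n)⁻¹)
        (-((n : ℝ) * (x - 2 + 4 * t) ^ (n - 1) * 1) / ((x - 2 + 4 * t) ^ n) ^ 2) x :=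
      hp.inv (by positivity)
    have hd := hi.const_mul (gW k t)
    simp only [div_eq_mul_inv] at hd ⊢
    refine hd.congr_deriv ?_
    rcases n with _ | n
    · simp
    · simp only [Nat.add_sub_cancel]
      field_simp
      ring

lemma GI_contDiffOn (k : ℕ) (m : ℕ) : ∀ n, ContDiffOn ℝ m (GI k n) (Ioi 2) := by
  induction m with
  | zero =>
    intro n
    simp only [Nat.cast_zero, contDiffOn_zero]
    exact fun w hw => (GI_deriv k n hw).continuousAt.continuousWithinAt
  | succ m ih =>
    intro n
    rw [Nat.cast_succ, contDiffOn_succ_iff_deriv_of_isOpen isOpen_Ioi]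
    refine ⟨fun w hw => (GI_deriv k n hw).differentiableAt.differentiableWithinAt, by simp, ?_⟩
    exact ((contDiffOn_const (c := -(n:ℝ))).mul (ih (n + 1))).congr
      fun w hw => (GI_deriv k n hw).deriv

lemma iter_of_eq (k : ℕ) (C : ℝ) (f : ℝ → ℝ) (hf : ∀ w > 2, f w = C * GI k 1 w) (n : ℕ) :
    ∀ w > 2, iteratedDeriv n f w = (-1) ^ n * (n.factorial : ℝ) * C * GI k (n + 1) w := by
  induction n with
  | zero => intro w hw; simp [hf w hw]
  | succ n ih =>
    intro w hw
    rw [iteratedDeriv_succ]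
    have : iteratedDeriv n f =ᶠ[nhds w]
        fun w => (-1) ^ n * (n.factorial : ℝ) * C * GI k (n + 1) w := by
      filter_upwards [Ioi_mem_nhds hw] with x hx using ih x hx
    rw [this.deriv_eq, ((GI_deriv k (n + 1) hw).const_mul _).deriv, Nat.factorial_succ]
    push_cast
    ring

lemma GI_zero (w : ℝ) (hw : 2 < w) : GI 0 1 w = Real.pi / Real.sqrt (w ^ 2 - 4) := by
  set s := Real.sqrt (w ^ 2 - 4) with hs
  have hs0 : 0 < s := Real.sqrt_pos.2 (by nlinarith)
  have hs2 : s ^ 2 = w ^ 2 - 4 := Real.sq_sqrt (by nlinarith)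
  let F : ℝ → ℝ := fun t => Real.arccos (((w - 2) - 2 * w * t) / (w - 2 + 4 * t)) / s
  have hFc : ContinuousOn F (Icc 0 1) := by
    apply ContinuousOn.div_const
    apply Real.continuous_arccos.comp_continuousOn
    apply ContinuousOn.div (by fun_prop) (by fun_prop)
    intro t ht
    have : 0 < w - 2 + 4 * t := by linarith [ht.1]
    exact this.ne'
  have hFd : ∀ t ∈ Ioo (0:ℝ) 1, HasDerivAt F (gW 0 t / (w - 2 + 4 * t) ^ 1) t := by
    intro t ht
    obtain ⟨h0, h1⟩ := ht
    have hd : 0 < w - 2 + 4 * t := by linarith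
    have h1t : 0 < 1 - t := by linarith
    have hn : HasDerivAt (fun t : ℝ => (w - 2) - 2 * w * t) (-(2 * w)) t := by
      simpa using ((hasDerivAt_id t).const_mul (2 * w)).const_sub (w - 2)
    have hdd : HasDerivAt (fun t : ℝ => w - 2 + 4 * t) 4 t := by
      simpa using ((hasDerivAt_id t).const_mul 4).const_add (w - 2)
    have hq := hn.div hdd hd.ne'
    set c := ((w - 2) - 2 * w * t) / (w - 2 + 4 * t) with hcdef
    have hw2 : 0 < w - 2 := by linarith
    have hc : 1 - c ^ 2 = (2 * s * (Real.sqrt t * Real.sqrt (1 - t)) / (w - 2 + 4 * t)) ^ 2 := by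
      rw [div_pow (2 * s * (Real.sqrt t * Real.sqrt (1 - t))), mul_pow, mul_pow, mul_pow, Real.sq_sqrt h0.le, Real.sq_sqrt h1t.le, hs2, hcdef]
      field_simp
      ring
    have hst := Real.sqrt_pos.2 h0
    have hst1 := Real.sqrt_pos.2 h1t
    have hpos : 0 < 1 - c ^ 2 := by rw [hc]; positivity
    have hA := (Real.hasDerivAt_arccos (x := c) (by rintro h; rw [h] at hpos; norm_num at hpos)
      (by rintro h; rw [h] at hpos; norm_num at hpos))
    have hB := (HasDerivAt.comp t hA hq).div_const s
    refine hB.congr_deriv ?_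
    rw [hc, Real.sqrt_sq (by positivity)]
    have hg : gW 0 t = 1 / (Real.sqrt t * Real.sqrt (1 - t)) := by
      unfold gW
      rw [Nat.cast_zero, zero_sub, Real.rpow_neg h0.le, Real.rpow_neg h1t.le,
        ← Real.sqrt_eq_rpow, ← Real.sqrt_eq_rpow]
      field_simp
    rw [hg]
    field_simp
    rw [hs2]
    ring
  have hI := intervalIntegral.integral_eq_sub_of_hasDerivAt_of_le zero_le_one hFc hFd
    (gW_div_int 0 1 hw)
  unfold GI
  rw [hI]
  have e1 : ((w - 2) - 2 * w * 1) / (w - 2 + 4 * 1) = -1 := by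
    rw [div_eq_iff (by linarith)]; ring
  have e0 : ((w - 2) - 2 * w * 0) / (w - 2 + 4 * 0) = 1 := by
    rw [div_eq_iff (by linarith)]; ring
  simp only [F, e1, e0, Real.arccos_neg_one, Real.arccos_one]
  ring

lemma GI_rec (k : ℕ) {w : ℝ} (hw : 2 < w) : 4 * GI (k + 1) 1 w + (w - 2) * GI k 1 w
    = Real.Gamma ((k : ℝ) + 1 / 2) * Real.sqrt Real.pi / (k.factorial : ℝ) := by
  rw [← gW_integral]
  unfold GI
  rw [← intervalIntegral.integral_const_mul, ← intervalIntegral.integral_const_mul,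
    ← intervalIntegral.integral_add ((gW_div_int _ _ hw).const_mul _)
      ((gW_div_int _ _ hw).const_mul _)]
  apply intervalIntegral.integral_congr_ae
  refine Eventually.of_forall fun t ht => ?_
  rw [uIoc_of_le zero_le_one] at ht
  have hd : 0 < w - 2 + 4 * t := by linarith [ht.1]
  have hg : gW (k + 1) t = t * gW k t := by
    unfold gW
    rw [show ((k + 1 : ℕ) : ℝ) - 1 / 2 = ((k : ℝ) - 1 / 2) + 1 by push_cast; ring,
      Real.rpow_add_one ht.1.ne']
    ring
  rw [hg]
  field_simp
  ring

/-- the constant -/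
noncomputable def cK (k : ℕ) : ℝ := ((2 * k).factorial : ℝ) /
          (Real.sqrt Real.pi * (k.factorial : ℝ) * Real.Gamma ((k : ℝ) + 1 / 2))

lemma cK_pos (k : ℕ) : 0 < cK k := by
  have : 0 < Real.Gamma ((k : ℝ) + 1 / 2) := Real.Gamma_pos_of_pos (by positivity)
  have := Real.pi_pos
  unfold cK
  positivity

lemma cK_zero : cK 0 = 1 / Real.pi := by
  unfold cK
  simp only [Nat.cast_zero, zero_add, Real.Gamma_one_half_eq]
  simp [Real.pi_pos.le]

lemma cK_succ (k : ℕ) : cK (k + 1) = 4 * cK k := by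
  have hG : 0 < Real.Gamma ((k : ℝ) + 1 / 2) := Real.Gamma_pos_of_pos (by positivity)
  have := Real.pi_pos
  unfold cK
  rw [show ((k + 1 : ℕ) : ℝ) + 1 / 2 = ((k : ℝ) + 1 / 2) + 1 by push_cast; ring,
    Real.Gamma_add_one (by positivity), show 2 * (k + 1) = 2 * k + 1 + 1 by ring,
    Nat.factorial_succ, Nat.factorial_succ, Nat.factorial_succ]
  push_cast
  field_simp
  ring

lemma cK_mul (k : ℕ) : cK k * (Real.Gamma ((k : ℝ) + 1 / 2) * Real.sqrt Real.pi /
    (k.factorial : ℝ)) = ((2 * k).choose k : ℝ) := by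
  have hG : 0 < Real.Gamma ((k : ℝ) + 1 / 2) := Real.Gamma_pos_of_pos (by positivity)
  have := Real.pi_pos
  rw [Nat.cast_choose ℝ (by omega : k ≤ 2 * k), show 2 * k - k = k by omega]
  unfold cK
  field_simp

lemma Pk_rec (k : ℕ) (q : ℝ) :
    q * (2 * Pk (k + 1) q - ((2 * (k + 1)).choose (k + 1) : ℝ))
      + (1 - q) ^ 2 * (2 * Pk k q - ((2 * k).choose k : ℝ))
      = ((2 * k).choose k : ℝ) * (1 - q ^ 2) := by
  obtain ⟨x, rfl⟩ : ∃ x, q = -x := ⟨-q, by ring⟩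
  let c : ℕ → ℝ := fun n => ((2 * k).choose (n + k) : ℝ)
  have hc1 : c (k + 1) = 0 := by
    simp only [c]; rw [Nat.choose_eq_zero_of_lt (by omega)]; simp
  have hc2 : c (k + 2) = 0 := by
    simp only [c]; rw [Nat.choose_eq_zero_of_lt (by omega)]; simp
  have hcs : ∀ m, ((2 * (k + 1)).choose (m + 1 + (k + 1)) : ℝ) = c (m + 2) + 2 * c (m + 1) + c m := by
    intro m
    simp only [c]
    rw [show 2 * (k + 1) = 2 * k + 1 + 1 by ring, show m + 1 + (k + 1) = (m + k + 1) + 1 by ring,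
      Nat.choose_succ_succ, Nat.choose_succ_succ, Nat.choose_succ_succ,
      show m + 2 + k = m + k + 1 + 1 by ring, show m + 1 + k = m + k + 1 by ring]
    push_cast
    ring
  have hc0 : ((2 * (k + 1)).choose (k + 1) : ℝ) = 2 * c 1 + 2 * c 0 := by
    have hsym : (2 * k + 1).choose k = (2 * k + 1).choose (k + 1) :=
      Nat.choose_symm_of_eq_add (by omega)
    simp only [c]
    rw [show 2 * (k + 1) = 2 * k + 1 + 1 by ring, Nat.choose_succ_succ, hsym,
      Nat.choose_succ_succ, show 1 + k = k + 1 by ring, show 0 + k = k by ring]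
    push_cast
    ring
  set A := ∑ m ∈ Finset.range (k + 1), c m * x ^ m with hA
  have hP : Pk k (-x) = A := by simp [Pk, hA, c]
  have hs1 : ∑ m ∈ Finset.range (k + 1), c (m + 1) * x ^ (m + 1) = A - c 0 := by
    have := Finset.sum_range_succ' (fun m => c m * x ^ m) (k + 1)
    rw [Finset.sum_range_succ] at this
    simp only [hc1, zero_mul, add_zero, pow_zero, mul_one] at this
    rw [hA]; linarith
  have hs2 : ∑ m ∈ Finset.range (k + 1), c (m + 2) * x ^ (m + 2) = A - c 0 - c 1 * x := by
    have := Finset.sum_range_succ' (fun m => c (m + 1) * x ^ (m + 1)) (k + 1)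
    rw [Finset.sum_range_succ, hs1] at this
    simp only [hc2, zero_mul, add_zero, zero_add, pow_one] at this
    linarith
  have hP' : x * Pk (k + 1) (-x) = x * (2 * c 1 + 2 * c 0) + (A - c 0 - c 1 * x)
      + 2 * x * (A - c 0) + x ^ 2 * A := by
    have : Pk (k + 1) (-x) = (2 * c 1 + 2 * c 0) + ∑ m ∈ Finset.range (k + 1),
        (c (m + 2) + 2 * c (m + 1) + c m) * x ^ (m + 1) := by
      unfold Pk
      rw [Finset.sum_range_succ', neg_neg]
      simp only [hcs, pow_zero, mul_one, zero_add, hc0]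
      ring
    rw [this, mul_add, Finset.mul_sum, ← hs2, ← hs1, hA, Finset.mul_sum, Finset.mul_sum,
      add_assoc, add_assoc, ← Finset.sum_add_distrib, ← Finset.sum_add_distrib]
    congr 1
    apply Finset.sum_congr rfl
    intros
    ring
  have hcc : ((2 * k).choose k : ℝ) = c 0 := by simp [c]
  rw [hP, hc0, hcc]
  linear_combination (-2) * hP'

lemma vOf_facts {w : ℝ} (hw : 2 < w) : 1 < vOf w ∧ vOf w + (vOf w)⁻¹ = w ∧
    vOf w - (vOf w)⁻¹ = Real.sqrt (w ^ 2 - 4) := by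
  have hs0 : 0 < Real.sqrt (w ^ 2 - 4) := Real.sqrt_pos.2 (by nlinarith)
  have hs2 : Real.sqrt (w ^ 2 - 4) ^ 2 = w ^ 2 - 4 := Real.sq_sqrt (by nlinarith)
  have hi : (vOf w)⁻¹ = (w - Real.sqrt (w ^ 2 - 4)) / 2 := by
    apply inv_eq_of_mul_eq_one_right
    unfold vOf
    nlinarith
  rw [hi]
  unfold vOf
  refine ⟨by linarith, by ring, by ring⟩

lemma main_aux (k : ℕ) {w : ℝ} (hw : 2 < w) :
    2 * Pk k (vOf w)⁻¹ - ((2 * k).choose k : ℝ) = Real.sqrt (w ^ 2 - 4) * (cK k * GI k 1 w) := by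
  have hs0 : 0 < Real.sqrt (w ^ 2 - 4) := Real.sqrt_pos.2 (by nlinarith)
  obtain ⟨hv, h1, h2⟩ := vOf_facts hw
  induction k with
  | zero =>
    rw [GI_zero w hw, cK_zero]
    have := Real.pi_pos
    simp [Pk]
    field_simp
    norm_num
  | succ k ih =>
    have hr := Pk_rec k (vOf w)⁻¹
    have hg := GI_rec k hw
    have hm := cK_mul k
    rw [← hg] at hm
    rw [cK_succ]
    set v := vOf w
    have hv0 : 0 < v := by linarith
    set q := v⁻¹
    have hq : v * q = 1 := mul_inv_cancel₀ hv0.ne'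
    rw [ih] at hr
    set D := 2 * Pk (k + 1) q - ((2 * (k + 1)).choose (k + 1) : ℝ)
    have e1 : D = ((2 * k).choose k : ℝ) * (v - q)
        - (w - 2) * (Real.sqrt (w ^ 2 - 4) * (cK k * GI k 1 w)) := by
      rw [← h1]
      have hr' := congrArg (fun z => v * z) hr
      grind
    rw [e1, h2, ← hm]
    ring

lemma delta_eq (k : ℕ) : ∀ w > 2, DeltaKU k 1 w = cK k * GI k 1 w := by
  intro w hw
  have hs0 : 0 < Real.sqrt (w ^ 2 - 4) := Real.sqrt_pos.2 (by nlinarith [show w > 2 from hw])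
  obtain ⟨hv, h1, h2⟩ := vOf_facts hw
  have hlt : ¬ (1 ≤ (vOf w)⁻¹) := not_le.2 (inv_lt_one_of_one_lt₀ hv)
  have hm := main_aux k hw
  unfold DeltaKU psiK Pkhat
  rw [one_mul, one_div, if_pos hv.le, if_neg hlt, h2, div_eq_iff hs0.ne']
  linarith

/-- for `k ≥ 1` and `w > 2`,
`Δ_{k,1}(w) = ((2k)!/(√π k! Γ(k+1/2))) ∫₀¹ t^{k-1/2} (1-t)^{-1/2} / (w-2+4t) dt`;
consequently `Δ_{k,1}` is completely monotone on `(2,∞)`. -/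
theorem deltaK1_completely_monotone (k : ℕ) (hk : 1 ≤ k) :
    (∀ w > 2, DeltaKU k 1 w
      = ((2 * k).factorial : ℝ) /
          (Real.sqrt Real.pi * (k.factorial : ℝ) * Real.Gamma ((k : ℝ) + 1 / 2)) *
        ∫ t in (0 : ℝ)..1,
          t ^ ((k : ℝ) - 1 / 2) * (1 - t) ^ (-(1 / 2) : ℝ) / (w - 2 + 4 * t)) ∧
    ContDiffOn ℝ (⊤ : ℕ∞) (DeltaKU k 1) (Ioi 2) ∧
    ∀ n : ℕ, ∀ w > 2, 0 ≤ (-1 : ℝ) ^ n * iteratedDeriv n (DeltaKU k 1) w := by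
  have h := delta_eq k
  refine ⟨fun w hw => ?_, ?_, fun n w hw => ?_⟩
  · rw [h w hw]
    unfold cK GI gW
    simp only [pow_one]
  · refine ContDiffOn.congr (f := fun w => cK k * GI k 1 w) ?_ h
    exact contDiffOn_const.mul (contDiffOn_infty.2 fun m => GI_contDiffOn k m 1)
  · rw [iter_of_eq k (cK k) _ h n w hw]
    have h1 := GI_nonneg k (n + 1) hw
    have h2 := (cK_pos k).le
    rw [show (-1 : ℝ) ^ n * ((-1) ^ n * (n.factorial : ℝ) * cK k * GI k (n + 1) w)
      = ((-1) ^ n * (-1) ^ n) * ((n.factorial : ℝ) * cK k * GI k (n + 1) w) by ring,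
      ← mul_pow]
    norm_num
    positivity
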